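/- Let (R,S,P,Q,φ,ψ) be a Morita context over k and M an (R,R)-bimodule with symmetric k-action. Then γ_• is a morphism of chain complexes: for every n ≥ 1, b ∘ γ_n = γ_{n−1} ∘ b as maps C_n(S,M̃) → C_{n−1}(R,M). -/

import Mathlib

open scoped TensorProduct
open MulOpposite

universe u

/-- The `k`-submodule of balancing relations `(m·a) ⊗ n − m ⊗ (a·n)` inside `M ⊗[k] N`,
for a `k`-algebra `A`, a right `A`-module `M` and a left `A`-module `N`.  The balanced
tensor product `M ⊗_A N` is the quotient of `M ⊗[k] N` by this submodule. -/
def midRel (k A M N : Type u) [CommRing k] [Ring A] [Algebra k A]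
    [AddCommGroup M] [Module k M] [Module Aᵐᵒᵖ M]
    [AddCommGroup N] [Module k N] [Module A N] :
    Submodule k (TensorProduct k M N) :=
  Submodule.span k {x | ∃ (m : M) (a : A) (n : N),
    x = (op a • m) ⊗ₜ[k] n - m ⊗ₜ[k] (a • n)}

/-- A Morita context `(R, S, P, Q, φ, ψ)` over the commutative ground ring `k`:
`P` is an `(S,R)`-bimodule and `Q` an `(R,S)`-bimodule (both with symmetric `k`-action,
right actions being encoded as left actions of the opposite algebras), and `φ` and `ψ` are
`k`-bilinear pairings `P × Q → S` and `Q × P → R` which descend to bimodule isomorphisms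
`φ : P ⊗_R Q ≅ S` and `ψ : Q ⊗_S P ≅ R` on the balanced tensor products:  the lifted maps on
`P ⊗[k] Q` resp. `Q ⊗[k] P` are surjective and their kernels are exactly the corresponding
submodules of balancing relations (so that the induced maps on the quotients realizing
`P ⊗_R Q` and `Q ⊗_S P` are well defined bijections); moreover the compatibilities
`φ(p ⊗ q)·p' = p·ψ(q ⊗ p')` and `ψ(q ⊗ p)·q' = q·φ(p ⊗ q')` hold. -/
structure MoritaContext (k R S P Q : Type u) [CommRing k] [Ring R] [Ring S]
    [Algebra k R] [Algebra k S]
    [AddCommGroup P] [Module k P] [Module S P] [Module Rᵐᵒᵖ P]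
    [SMulCommClass S Rᵐᵒᵖ P] [IsScalarTower k S P] [IsScalarTower k Rᵐᵒᵖ P]
    [AddCommGroup Q] [Module k Q] [Module R Q] [Module Sᵐᵒᵖ Q]
    [SMulCommClass R Sᵐᵒᵖ Q] [IsScalarTower k R Q] [IsScalarTower k Sᵐᵒᵖ Q] : Type u where
  φ : P →ₗ[k] Q →ₗ[k] S
  ψ : Q →ₗ[k] P →ₗ[k] R
  φ_ker : LinearMap.ker (TensorProduct.lift φ) = midRel k R P Q
  φ_surj : Function.Surjective (TensorProduct.lift φ)
  ψ_ker : LinearMap.ker (TensorProduct.lift ψ) = midRel k S Q P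
  ψ_surj : Function.Surjective (TensorProduct.lift ψ)
  φ_left : ∀ (s : S) (p : P) (q : Q), φ (s • p) q = s * φ p q
  φ_right : ∀ (s : S) (p : P) (q : Q), φ p (op s • q) = φ p q * s
  ψ_left : ∀ (r : R) (q : Q) (p : P), ψ (r • q) p = r * ψ q p
  ψ_right : ∀ (r : R) (q : Q) (p : P), ψ q (op r • p) = ψ q p * r
  assoc_φψ : ∀ (p : P) (q : Q) (p' : P), φ p q • p' = op (ψ q p') • p
  assoc_ψφ : ∀ (q : Q) (p : P) (q' : Q), ψ q p • q' = op (φ p q') • q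

section Hochschild

variable (k : Type u) [CommRing k]

/-- The `n`-th Hochschild chain module `C_n(A, N) = N ⊗_k A^{⊗_k n}`. -/
abbrev HChain (A N : Type u) [Ring A] [Algebra k A] [AddCommGroup N] [Module k N]
    (n : ℕ) :=
  N ⊗[k] (PiTensorProduct k (fun _ : Fin n => A))

/-- The generator `m ⊗ r₁ ⊗ ⋯ ⊗ rₙ` of `C_n(A, N)`. -/
noncomputable def hgen {A N : Type u} [Ring A] [Algebra k A] [AddCommGroup N] [Module k N]
    {n : ℕ} (m : N) (r : Fin n → A) : HChain k A N n :=
  m ⊗ₜ[k] PiTensorProduct.tprod k r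

/-- The tuple obtained from the tuple `r` of length `n + 1` by multiplying the entries at
the (0-based) positions `j` and `j + 1` (all other entries are kept, in their order). -/
def mergeAt {A : Type u} [Mul A] {n : ℕ} (r : Fin (n + 1) → A) (j : Fin n) : Fin n → A :=
  fun l =>
    if l.val < j.val then r l.castSucc
    else if l.val = j.val then r l.castSucc * r l.succ
    else r l.succ

end Hochschild

section Helpers

theorem hgen_sum_left {k : Type u} [CommRing k] {A N : Type u} [Ring A] [Algebra k A]
    [AddCommGroup N] [Module k N] {n : ℕ} {κ : Type u} [Fintype κ]
    (f : κ → N) (r : Fin n → A) :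
    ∑ x, hgen k (f x) r = hgen k (∑ x, f x) r := by
  simp only [hgen, TensorProduct.sum_tmul]

theorem hgen_sum_update {k : Type u} [CommRing k] {A N : Type u} [Ring A] [Algebra k A]
    [AddCommGroup N] [Module k N] {n : ℕ} {κ : Type u} [Fintype κ]
    (m : N) (r : Fin n → A) (j : Fin n) (f : κ → A) :
    ∑ x, hgen k m (Function.update r j (f x)) = hgen k m (Function.update r j (∑ x, f x)) := by
  simp only [hgen, MultilinearMap.map_update_sum, TensorProduct.tmul_sum]

theorem sum_insertNth {κ X : Type u} [Fintype κ] [AddCommMonoid X] {n : ℕ} (i : Fin (n + 1))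
    (F : (Fin (n + 1) → κ) → X) :
    ∑ g, F g = ∑ h : Fin n → κ, ∑ x : κ, F (Fin.insertNth (α := fun _ => κ) i x h) := by
  rw [← (Fin.insertNthEquiv (fun _ => κ) i).sum_comp F, Fintype.sum_prod_type_right]
  rfl

theorem hlin_ext {k : Type u} [CommRing k] {A N X : Type u} [Ring A] [Algebra k A]
    [AddCommGroup N] [Module k N] [AddCommGroup X] [Module k X] {n : ℕ}
    (f g : HChain k A N n →ₗ[k] X) (T : Set N) (hT : Submodule.span k T = ⊤)
    (h : ∀ m ∈ T, ∀ r : Fin n → A, f (hgen k m r) = g (hgen k m r)) : f = g := by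
  apply TensorProduct.ext
  apply LinearMap.ext_on hT
  intro m hm
  apply PiTensorProduct.ext
  ext r
  exact h m hm r

theorem insertNth_at {κ : Type u} {n : ℕ} (i : Fin (n + 1)) (x : κ) (h : Fin n → κ)
    (a : Fin (n + 1)) (b : Fin n) (hab : a = i.succAbove b) :
    Fin.insertNth (α := fun _ => κ) i x h a = h b := by
  subst hab
  simp

theorem fin_aux1 {n : ℕ} (i : ℕ) (hi : 1 ≤ i) (hi' : i < n + 2) (l : Fin n) (hl : i ≤ l.val + 2) :
    (l.succ.succ + 1 : Fin (n + 2)) = (⟨i, hi'⟩ : Fin (n + 2)).succAbove (l.succ + 1) := by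
  have hlt := l.isLt
  apply Fin.ext
  simp only [Fin.succAbove, Fin.lt_def, Fin.val_castSucc, Fin.val_add_one, Fin.ext_iff,
    Fin.val_succ, Fin.val_last]
  split_ifs <;> simp_all [Fin.val_add_one, Fin.ext_iff] <;> omega

theorem fin_aux2 {n : ℕ} (i : ℕ) (hi' : i < n + 2) (l : Fin n) (hl : i ≤ l.val + 1) :
    (l.succ.succ : Fin (n + 2)) = (⟨i, hi'⟩ : Fin (n + 2)).succAbove l.succ := by
  apply Fin.ext
  simp only [Fin.succAbove, Fin.lt_def, Fin.val_castSucc, Fin.val_succ]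
  split_ifs <;> simp_all <;> omega

theorem fin_aux3 {n : ℕ} (i : ℕ) (hi' : i < n + 2) (l : Fin n) (hl : l.val + 1 < i) :
    (l.castSucc.succ : Fin (n + 2)) = (⟨i, hi'⟩ : Fin (n + 2)).succAbove l.succ := by
  apply Fin.ext
  simp only [Fin.succAbove, Fin.lt_def, Fin.val_castSucc, Fin.val_succ]
  split_ifs <;> simp_all

theorem fin_aux4 {n : ℕ} (l : Fin n) : (l.castSucc.succ + 1 : Fin (n + 2)) = l.succ.succ := by
  apply Fin.ext
  have := l.isLt
  simp only [Fin.val_add_one, Fin.ext_iff, Fin.val_succ, Fin.val_castSucc, Fin.val_last]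
  split_ifs <;> omega

theorem fin_aux5 {n : ℕ} (i : ℕ) (hi' : i < n + 2) (l : Fin n) (hl : l.val + 2 < i) :
    (l.succ.succ : Fin (n + 2)) = (⟨i, hi'⟩ : Fin (n + 2)).succAbove (l.succ + 1) := by
  apply Fin.ext
  have := l.isLt
  simp only [Fin.succAbove, Fin.lt_def, Fin.val_castSucc, Fin.val_add_one, Fin.ext_iff,
    Fin.val_succ, Fin.val_last]
  split_ifs <;> simp_all [Fin.val_add_one, Fin.ext_iff] <;> omega

theorem fin_aux6 {n : ℕ} (l : Fin n) : (l.castSucc + 1 : Fin (n + 1)) = l.succ := by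
  simp

theorem fin_aux7 {n : ℕ} (i : ℕ) (hi : 2 ≤ i) (hi' : i < n + 2) :
    (1 : Fin (n + 2)) = (⟨i, hi'⟩ : Fin (n + 2)).succAbove 1 := by
  cases n with
  | zero => omega
  | succ n =>
    apply Fin.ext
    simp only [Fin.succAbove, Fin.lt_def, Fin.val_castSucc, Fin.val_one]
    rw [if_pos (by omega)]
    simp

theorem fin_aux8 {n : ℕ} (i : ℕ) (hi : 1 ≤ i) (hi' : i < n + 2) :
    (0 : Fin (n + 2)) = (⟨i, hi'⟩ : Fin (n + 2)).succAbove 0 := by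
  apply Fin.ext
  simp only [Fin.succAbove, Fin.lt_def, Fin.val_castSucc, Fin.val_zero]
  split_ifs <;> simp_all

theorem fin_aux9 {n : ℕ} :
    ((0 : Fin (n + 1)).succ + 1 : Fin (n + 2)) = (⟨1, by omega⟩ : Fin (n + 2)).succAbove 1 := by
  cases n with
  | zero => rfl
  | succ n => rfl

end Helpers


/-- Let `(R, S, P, Q, φ, ψ)` be a Morita context over `k` and `M` an
`(R,R)`-bimodule with symmetric `k`-action.  Then `γ_•` is a morphism of chain complexes:
for every `n ≥ 1`, `b ∘ γ_n = γ_{n−1} ∘ b` as maps `C_n(S, M̃) → C_{n−1}(R, M)`  (below,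
degrees are shifted so that the statement for all `n : ℕ` is exactly the statement for all
`n ≥ 1` of the paper). -/
theorem gamma_chain_map
    (k R S P Q M Mt : Type u) [CommRing k] [Ring R] [Ring S] [Algebra k R] [Algebra k S]
    [AddCommGroup P] [Module k P] [Module S P] [Module Rᵐᵒᵖ P]
    [SMulCommClass S Rᵐᵒᵖ P] [IsScalarTower k S P] [IsScalarTower k Rᵐᵒᵖ P]
    [AddCommGroup Q] [Module k Q] [Module R Q] [Module Sᵐᵒᵖ Q]
    [SMulCommClass R Sᵐᵒᵖ Q] [IsScalarTower k R Q] [IsScalarTower k Sᵐᵒᵖ Q]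
    [AddCommGroup M] [Module k M] [Module R M] [Module Rᵐᵒᵖ M]
    [SMulCommClass R Rᵐᵒᵖ M] [IsScalarTower k R M] [IsScalarTower k Rᵐᵒᵖ M]
    [AddCommGroup Mt] [Module k Mt] [Module S Mt] [Module Sᵐᵒᵖ Mt]
    [SMulCommClass S Sᵐᵒᵖ Mt] [IsScalarTower k S Mt] [IsScalarTower k Sᵐᵒᵖ Mt]
    -- the Morita context and the fixed finite families with `Σⱼ φ(p'ⱼ ⊗ q'ⱼ) = 1_S`
    -- and `Σᵢ ψ(qᵢ ⊗ pᵢ) = 1_R`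
    (ctx : MoritaContext k R S P Q)
    (ι κ : Type u) [Fintype ι] [Fintype κ]
    (pI : ι → P) (qI : ι → Q) (pJ : κ → P) (qJ : κ → Q)
    (hI : ∑ i : ι, ctx.ψ (qI i) (pI i) = 1)
    (hJ : ∑ j : κ, ctx.φ (pJ j) (qJ j) = 1)
    -- `Mt` plays the role of `M̃ = P ⊗_R M ⊗_R Q`, with `emb p m q` the class of
    -- `p ⊗ m ⊗ q`; it is an `(S,S)`-bimodule spanned by these classes, the `S`-actions
    -- being `s·(p ⊗ m ⊗ q)·s' = (s·p) ⊗ m ⊗ (q·s')`, and the tensor products are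
    -- balanced over `R`
    (emb : P →ₗ[k] M →ₗ[k] Q →ₗ[k] Mt)
    (hemb_bal₁ : ∀ (r : R) (p : P) (m : M) (q : Q), emb (op r • p) m q = emb p (r • m) q)
    (hemb_bal₂ : ∀ (r : R) (p : P) (m : M) (q : Q), emb p (op r • m) q = emb p m (r • q))
    (hemb_left : ∀ (s : S) (p : P) (m : M) (q : Q), emb (s • p) m q = s • emb p m q)
    (hemb_right : ∀ (s : S) (p : P) (m : M) (q : Q), emb p m (op s • q) = op s • emb p m q)
    (hemb_span : Submodule.span k {x : Mt | ∃ (p : P) (m : M) (q : Q), emb p m q = x} = ⊤)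
    -- the Hochschild boundaries of `C_•(R, M)` and `C_•(S, M̃)`
    (bR : ∀ n, HChain k R M (n + 1) →ₗ[k] HChain k R M n)
    (hbR : ∀ (n : ℕ) (m : M) (r : Fin (n + 1) → R),
      bR n (hgen k m r) =
        hgen k (r (Fin.last n) • m) (Fin.init r)
          + ∑ j : Fin n, ((-1 : ℤ) ^ (n - j.val)) • hgen k m (mergeAt r j)
          + ((-1 : ℤ) ^ (n + 1)) • hgen k (op (r 0) • m) (Fin.tail r))
    (bS : ∀ n, HChain k S Mt (n + 1) →ₗ[k] HChain k S Mt n)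
    (hbS : ∀ (n : ℕ) (m : Mt) (s : Fin (n + 1) → S),
      bS n (hgen k m s) =
        hgen k (s (Fin.last n) • m) (Fin.init s)
          + ∑ j : Fin n, ((-1 : ℤ) ^ (n - j.val)) • hgen k m (mergeAt s j)
          + ((-1 : ℤ) ^ (n + 1)) • hgen k (op (s 0) • m) (Fin.tail s))
    -- the chain map `γ_•`
    (γ : ∀ n, HChain k S Mt n →ₗ[k] HChain k R M n)
    (hγ : ∀ (n : ℕ) (p : P) (m : M) (q : Q) (s : Fin n → S),
      γ n (hgen k (emb p m q) s) =
        ∑ g : Fin (n + 1) → κ,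
          hgen k (ctx.ψ (qJ (g 0)) p • (op (ctx.ψ q (pJ (g 1))) • m))
            (fun l : Fin n => ctx.ψ (qJ (g l.succ)) (s l • pJ (g (l.succ + 1)))))
 :
    ∀ n : ℕ, (bR n).comp (γ (n + 1)) = (γ n).comp (bS n) := by
  have key : ∀ (q : Q) (s : S) (p : P),
      ∑ x, ctx.ψ q (s • pJ x) * ctx.ψ (qJ x) p = ctx.ψ q (s • p) := by
    intro q s p
    have h1 : ∀ x, ctx.ψ q (s • pJ x) * ctx.ψ (qJ x) p
        = ctx.ψ q (s • (ctx.φ (pJ x) (qJ x) • p)) := by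
      intro x
      rw [← ctx.ψ_right, ← smul_comm, ctx.assoc_φψ]
    simp only [h1]
    rw [← map_sum, ← Finset.smul_sum, ← Finset.sum_smul, hJ, one_smul]
  have key1 : ∀ (q : Q) (p : P),
      ∑ x, ctx.ψ q (pJ x) * ctx.ψ (qJ x) p = ctx.ψ q p := by
    intro q p
    simpa using key q 1 p
  have bal : ∀ (q : Q) (s : S) (p : P), ctx.ψ (op s • q) p = ctx.ψ q (s • p) := by
    intro q s p
    have h1 : (op s • q) ⊗ₜ[k] p - q ⊗ₜ[k] (s • p) ∈ LinearMap.ker (TensorProduct.lift ctx.ψ) := by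
      rw [ctx.ψ_ker]
      exact Submodule.subset_span ⟨q, s, p, rfl⟩
    rw [LinearMap.mem_ker, map_sub, TensorProduct.lift.tmul, TensorProduct.lift.tmul] at h1
    exact sub_eq_zero.mp h1
  intro n
  apply hlin_ext _ _ _ hemb_span
  rintro _ ⟨p, m, q, rfl⟩ s
  rw [LinearMap.comp_apply, LinearMap.comp_apply, hγ, hbS, map_sum, map_add, map_add, map_sum]
  simp only [hbR, map_zsmul]
  rw [Finset.sum_add_distrib, Finset.sum_add_distrib]
  congr 1
  · congr 1
    · rw [← hemb_left, hγ]
      rw [sum_insertNth 0]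
      rw [← (Equiv.arrowCongr (Equiv.addRight (1 : Fin (n + 1))).symm (Equiv.refl κ)).sum_comp]
      refine Finset.sum_congr rfl fun h _ => ?_
      set h' : Fin (n + 1) → κ :=
        (Equiv.arrowCongr (Equiv.addRight (1 : Fin (n + 1))).symm (Equiv.refl κ)) h with hh'
      have e : ∀ i, h' i = h (i + 1) := fun i => rfl
      rw [← key, Finset.sum_smul, ← hgen_sum_left]
      refine Finset.sum_congr rfl fun x _ => ?_
      have e1 : ∀ i : Fin (n + 1), Fin.insertNth (α := fun _ => κ) 0 x h' i.succ = h' i := by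
        intro i; simp
      have e0 : Fin.insertNth (α := fun _ => κ) 0 x h' (0 : Fin (n + 2)) = x := by simp
      have e2 : Fin.insertNth (α := fun _ => κ) 0 x h' (1 : Fin (n + 2)) = h 1 := by
        have := e1 0
        rw [e, zero_add] at this
        exact this
      have e3 : (Fin.last n).succ + 1 = (0 : Fin (n + 2)) := by simp
      congr 1
      · rw [e3, e0, e2, e1, e, mul_smul]
        simp
      · funext l
        simp only [Fin.init]
        rw [fin_aux4, e1, e1, e, e, fin_aux6]
    · rw [Finset.sum_comm]
      refine Finset.sum_congr rfl fun j _ => ?_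
      rw [← Finset.smul_sum]
      congr 1
      rw [hγ]
      rw [sum_insertNth ⟨j.val + 2, by omega⟩]
      refine Finset.sum_congr rfl fun h _ => ?_
      have hup : (fun l : Fin n => ctx.ψ (qJ (h l.succ)) (mergeAt s j l • pJ (h (l.succ + 1))))
          = Function.update
              (fun l : Fin n => ctx.ψ (qJ (h l.succ)) (mergeAt s j l • pJ (h (l.succ + 1)))) j
              (∑ x, ctx.ψ (qJ (h j.succ)) (s j.castSucc • pJ x) *
                ctx.ψ (qJ x) (s j.succ • pJ (h (j.succ + 1)))) := by
        rw [key, ← mul_smul]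
        symm
        rw [Function.update_eq_self_iff]
        simp [mergeAt]
      rw [hup, ← hgen_sum_update]
      refine Finset.sum_congr rfl fun x _ => ?_
      have hj := j.isLt
      rw [insertNth_at _ _ _ _ _ (fin_aux8 (j.val + 2) (by omega) (by omega)),
        insertNth_at _ _ _ _ _ (fin_aux7 (j.val + 2) (by omega) (by omega))]
      congr 1
      funext l
      rcases lt_trichotomy l.val j.val with hl | hl | hl
      · have hne : l ≠ j := by rintro rfl; omega
        rw [Function.update_of_ne hne]
        simp only [mergeAt, hl, if_true]
        rw [fin_aux4, insertNth_at _ _ _ _ _ (fin_aux3 (j.val + 2) (by omega) l (by omega)),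
          insertNth_at _ _ _ _ _ (fin_aux5 (j.val + 2) (by omega) l (by omega))]
      · have hlj : l = j := Fin.ext hl
        subst hlj
        rw [Function.update_self]
        simp only [mergeAt, lt_irrefl, if_false, if_true]
        rw [fin_aux4, insertNth_at _ _ _ _ _ (fin_aux3 (l.val + 2) (by omega) l (by omega)),
          insertNth_at _ _ _ _ _ (fin_aux1 (l.val + 2) (by omega) (by omega) l (by omega))]
        have ex : Fin.insertNth (α := fun _ => κ) ⟨l.val + 2, by omega⟩ x h l.succ.succ = x :=
          Fin.insertNth_apply_same (α := fun _ => κ) l.succ.succ x h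
        rw [ex]
      · have hne : l ≠ j := by rintro rfl; omega
        rw [Function.update_of_ne hne]
        have h1 : ¬ l.val < j.val := by omega
        have h2 : ¬ l.val = j.val := by omega
        simp only [mergeAt, h1, h2, if_false]
        rw [insertNth_at _ _ _ _ _ (fin_aux2 (j.val + 2) (by omega) l (by omega)),
          insertNth_at _ _ _ _ _ (fin_aux1 (j.val + 2) (by omega) (by omega) l (by omega))]
  · rw [← Finset.smul_sum]
    congr 1
    rw [← hemb_right, hγ]
    rw [sum_insertNth ⟨1, by omega⟩]
    refine Finset.sum_congr rfl fun h _ => ?_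
    rw [bal, ← key1 q, Finset.op_sum, Finset.sum_smul, Finset.smul_sum, ← hgen_sum_left]
    refine Finset.sum_congr rfl fun x _ => ?_
    rw [insertNth_at _ _ _ _ _ (fin_aux8 1 (by omega) (by omega)),
      insertNth_at _ _ _ _ _ fin_aux9]
    have ex : Fin.insertNth (α := fun _ => κ) ⟨1, by omega⟩ x h (1 : Fin (n + 2)) = x :=
      Fin.insertNth_apply_same (α := fun _ => κ) (1 : Fin (n + 2)) x h
    have ex' : Fin.insertNth (α := fun _ => κ) ⟨1, by omega⟩ x h (0 : Fin (n + 1)).succ = x := ex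
    congr 1
    · rw [ex, ex', ← smul_comm, op_mul, mul_smul]
    · funext l
      simp only [Fin.tail]
      rw [insertNth_at _ _ _ _ _ (fin_aux2 1 (by omega) l (by omega)),
        insertNth_at _ _ _ _ _ (fin_aux1 1 (by omega) (by omega) l (by omega))]
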